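/- A regular ω-language F ⊆ X^ω is of first Baire category in the Cantor space X^ω if and only if no ζ ∈ F is a disjunctive ω-word. -/

import Mathlib

open Set MeasureTheory Computability

namespace AutoBaire

/-- The Cantor topology on the space of ω-words over `X`:
the product of the discrete topology on `X`. -/
def cantorTop (X : Type) : TopologicalSpace (ℕ → X) :=
  @Pi.topologicalSpace ℕ (fun _ => X) (fun _ => ⊥)

/-- The Borel σ-algebra of the Cantor space. -/
def cantorBorel (X : Type) : MeasurableSpace (ℕ → X) :=
  @borel (ℕ → X) (cantorTop X)

variable {X : Type}

/-- Concatenation `w·ξ` of a finite word with an ω-word. -/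
def wcat (w : List X) (ξ : ℕ → X) : ℕ → X :=
  Stream'.appendStream' w ξ

/-- The ball (cylinder) `w·X^ω`. -/
def cyl (w : List X) : Set (ℕ → X) := {ξ | ∃ η : ℕ → X, ξ = wcat w η}

/-- The ω-language `W·A` for a language `W` and an ω-language `A`. -/
def catOmega (W : Language X) (A : Set (ℕ → X)) : Set (ℕ → X) :=
  {ξ | ∃ w ∈ W, ∃ η ∈ A, ξ = wcat w η}

/-- `V^ω`: the set of ω-words that are infinite concatenations
`v₁·v₂·⋯` of non-empty words `vᵢ ∈ V`. -/
def omegaPow (V : Language X) : Set (ℕ → X) :=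
  {ξ | ∃ f : ℕ → List X, (∀ i, f i ∈ V ∧ f i ≠ []) ∧
    ∀ k, ξ ∈ cyl (((List.range k).map f).flatten)}

/-- Regular languages: those obtained from finite languages via the operations
union, concatenation and star. -/
inductive IsRegLang : Language X → Prop
  | finite (W : Language X) : (W : Set (List X)).Finite → IsRegLang W
  | union (W V : Language X) : IsRegLang W → IsRegLang V → IsRegLang (W + V)
  | concat (W V : Language X) : IsRegLang W → IsRegLang V → IsRegLang (W * V)
  | star (W : Language X) : IsRegLang W → IsRegLang (W∗)

/-- Regular ω-languages: finite unions `⋃ᵢ Wᵢ·Vᵢ^ω` with `Wᵢ, Vᵢ` regular. -/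
def IsRegOmega (F : Set (ℕ → X)) : Prop :=
  ∃ (n : ℕ) (W V : Fin n → Language X),
    (∀ i, IsRegLang (W i) ∧ IsRegLang (V i)) ∧
    F = ⋃ i, catOmega (W i) (omegaPow (V i))

/-- `X*·w·X^ω`: the set of ω-words containing `w` as an infix. -/
def infixOcc (w : List X) : Set (ℕ → X) :=
  {ξ | ∃ u : List X, ξ ∈ cyl (u ++ w)}

/-- An ω-word is disjunctive if every finite word occurs in it as an infix. -/
def Disjunctive (ξ : ℕ → X) : Prop := ∀ w : List X, ξ ∈ infixOcc w

/-- Ultimately periodic ω-words: `ξ = w·v·v·v·⋯` with `v ≠ e`. -/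
def UltPeriodic (ξ : ℕ → X) : Prop :=
  ∃ (w v : List X) (h : v ≠ []), ξ = wcat w (Stream'.cycle v h)

/-- The Automatic Baire property: `F Δ E ⊆ F'` for some regular open
ω-language `E` and some regular ω-language `F'` of first Baire category. -/
def HasABP (F : Set (ℕ → X)) : Prop :=
  ∃ E F' : Set (ℕ → X),
    IsRegOmega E ∧ @IsOpen _ (cantorTop X) E ∧
    IsRegOmega F' ∧ @IsMeagre _ (cantorTop X) F' ∧
    symmDiff F E ⊆ F'

/-- The measure is finite and non-null: `0 < μ(X^ω) < ∞`. -/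
def FiniteNonNull (μ : @MeasureTheory.Measure (ℕ → X) (cantorBorel X)) : Prop :=
  0 < μ Set.univ ∧ μ Set.univ < ⊤

/-- `supp(μ) = X^ω`: every non-empty open set has positive measure. -/
def FullSupport (μ : @MeasureTheory.Measure (ℕ → X) (cantorBorel X)) : Prop :=
  ∀ U : Set (ℕ → X), @IsOpen _ (cantorTop X) U → U.Nonempty → 0 < μ U

/-- The balance condition: there is `c > 0` such that for all `w ∈ X*`, `x ∈ X`
either `μ(wx·X^ω) = 0` or `c·μ(w·X^ω) ≤ μ(wx·X^ω)`. -/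
def Balanced (μ : @MeasureTheory.Measure (ℕ → X) (cantorBorel X)) : Prop :=
  ∃ c : ENNReal, 0 < c ∧ ∀ (w : List X) (x : X),
    μ (cyl (w ++ [x])) = 0 ∨ c * μ (cyl w) ≤ μ (cyl (w ++ [x]))


def tk (n : ℕ) (ξ : ℕ → X) : List X := Stream'.take n ξ

def dp (n : ℕ) (ξ : ℕ → X) : ℕ → X := Stream'.drop n ξ

theorem tk_length (n : ℕ) (ξ : ℕ → X) : (tk n ξ).length = n := Stream'.length_take n ξ

theorem wcat_tk_dp (n : ℕ) (ξ : ℕ → X) : wcat (tk n ξ) (dp n ξ) = ξ :=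
  Stream'.append_take_drop n ξ

theorem dp_wcat (w : List X) (ξ : ℕ → X) : dp w.length (wcat w ξ) = ξ :=
  Stream'.drop_append_stream w ξ

theorem dp_dp (m n : ℕ) (ξ : ℕ → X) : dp m (dp n ξ) = dp (n + m) ξ :=
  Stream'.drop_drop m n ξ

theorem wcat_append (u v : List X) (ξ : ℕ → X) : wcat (u ++ v) ξ = wcat u (wcat v ξ) :=
  Stream'.append_append_stream u v ξ

theorem tk_wcat_add (w : List X) (n : ℕ) (ξ : ℕ → X) :
    tk (w.length + n) (wcat w ξ) = w ++ tk n ξ := (Stream'.append_take n w ξ).symm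

theorem tk_wcat (w : List X) (ξ : ℕ → X) : tk w.length (wcat w ξ) = w := by
  have h := tk_wcat_add w 0 ξ
  have h0 : tk 0 ξ = [] := rfl
  rwa [h0, List.append_nil, Nat.add_zero] at h

theorem tk_add (n m : ℕ) (ξ : ℕ → X) : tk (n + m) ξ = tk n ξ ++ tk m (dp n ξ) := by
  have := tk_wcat_add (tk n ξ) m (dp n ξ)
  rwa [wcat_tk_dp, tk_length] at this

theorem tk_succ (n : ℕ) (ξ : ℕ → X) : tk (n+1) ξ = tk n ξ ++ [ξ n] :=
  Stream'.take_succ' (s := ξ) n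

theorem mem_cyl (w : List X) (ξ : ℕ → X) : ξ ∈ cyl w ↔ tk w.length ξ = w := by
  constructor
  · rintro ⟨η, rfl⟩
    exact tk_wcat w η
  · intro h
    refine ⟨dp w.length ξ, ?_⟩
    conv_rhs => rw [← h]
    rw [tk_length, wcat_tk_dp]

theorem wcat_mem_cyl (w : List X) (ξ : ℕ → X) : wcat w ξ ∈ cyl w := ⟨ξ, rfl⟩

theorem cyl_append (u v : List X) (ξ : ℕ → X) (h : ξ ∈ cyl (u ++ v)) : ξ ∈ cyl u := by
  obtain ⟨η, rfl⟩ := h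
  rw [wcat_append]
  exact wcat_mem_cyl _ _

theorem dp_cyl_append (u v : List X) (ξ : ℕ → X) (h : ξ ∈ cyl (u ++ v)) :
    dp u.length ξ ∈ cyl v := by
  obtain ⟨η, rfl⟩ := h
  rw [wcat_append, dp_wcat]
  exact wcat_mem_cyl _ _

theorem tk_eq_of_cyl (w : List X) (ξ : ℕ → X) (n : ℕ) (hn : w.length ≤ n) (h : ξ ∈ cyl w) :
    ∃ t, tk n ξ = w ++ t := by
  obtain ⟨m, rfl⟩ := Nat.exists_eq_add_of_le hn
  rw [mem_cyl] at h
  exact ⟨_, by rw [tk_add, h]⟩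

theorem tk_inj {n : ℕ} {ξ η : ℕ → X} (h : tk n ξ = tk n η) : ∀ i < n, ξ i = η i := by
  induction n with
  | zero => intro i hi; omega
  | succ n ih =>
    rw [tk_succ, tk_succ] at h
    have h2 := List.append_inj h (by rw [tk_length, tk_length])
    intro i hi
    rcases Nat.lt_succ_iff_lt_or_eq.1 hi with h3 | rfl
    · exact ih h2.1 i h3
    · simpa using h2.2

/-! topology -/

theorem isOpen_tk (n : ℕ) (P : List X → Prop) : @IsOpen _ (cantorTop X) {ξ | P (tk n ξ)} := by
  letI : TopologicalSpace X := ⊥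
  haveI : DiscreteTopology X := ⟨rfl⟩
  change IsOpen {ξ : ℕ → X | P (tk n ξ)}
  induction n generalizing P with
  | zero => exact isOpen_const (p := P [])
  | succ n ih =>
    have : {ξ : ℕ → X | P (tk (n+1) ξ)} =
        ⋃ x : X, ({ξ : ℕ → X | P (tk n ξ ++ [x])} ∩ (fun ξ : ℕ → X => ξ n) ⁻¹' {x}) := by
      ext ξ
      simp [tk_succ]
    rw [this]
    exact isOpen_iUnion fun x => (ih (fun l => P (l ++ [x]))).inter
      ((isOpen_discrete {x}).preimage (continuous_apply n))

theorem isOpen_cyl (w : List X) : @IsOpen _ (cantorTop X) (cyl w) := by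
  have : cyl w = {ξ | tk w.length ξ = w} := by ext ξ; exact mem_cyl w ξ
  rw [this]
  exact isOpen_tk _ (fun l => l = w)

theorem exists_cyl_subset {U : Set (ℕ → X)} (hU : @IsOpen _ (cantorTop X) U) {ξ : ℕ → X}
    (hξ : ξ ∈ U) : ∃ N, ∀ n ≥ N, cyl (tk n ξ) ⊆ U := by
  letI : TopologicalSpace X := ⊥
  haveI : DiscreteTopology X := ⟨rfl⟩
  have hU' : IsOpen U := hU
  obtain ⟨I, u, h1, h2⟩ := isOpen_pi_iff.1 hU' ξ hξ
  refine ⟨I.sup id + 1, fun n hn η hη => h2 ?_⟩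
  rw [mem_cyl, tk_length] at hη
  intro i hi
  have : i ≤ I.sup id := Finset.le_sup (f := id) hi
  rw [tk_inj hη i (by omega)]
  exact (h1 i hi).2

theorem dense_of {D : Set (ℕ → X)}
    (h : ∀ N, ∀ ξ : ℕ → X, ∃ n ≥ N, ∃ η ∈ cyl (tk n ξ), η ∈ D) : @Dense _ (cantorTop X) D := by
  letI := cantorTop X
  rw [dense_iff_inter_open]
  rintro U hU ⟨ξ, hξ⟩
  obtain ⟨N, hN⟩ := exists_cyl_subset hU hξ
  obtain ⟨n, hn, η, h1, h2⟩ := h N ξ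
  exact ⟨η, hN n hn h1, h2⟩

theorem residual_inter [Finite X] (D : ℕ → Set (ℕ → X)) (hD : ∀ n, @IsOpen _ (cantorTop X) (D n))
    (hd : ∀ n, @Dense _ (cantorTop X) (D n)) (F : Set (ℕ → X))
    (hF : @IsMeagre _ (cantorTop X) F) (U : Set (ℕ → X)) (hU : @IsOpen _ (cantorTop X) U)
    (hne : U.Nonempty) : ∃ ξ ∈ U, (∀ n, ξ ∈ D n) ∧ ξ ∉ F := by
  letI : TopologicalSpace X := ⊥
  haveI : DiscreteTopology X := ⟨rfl⟩
  have h1 : Fᶜ ∈ residual (ℕ → X) := hF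
  have h2 : (⋂ n, D n) ∈ residual (ℕ → X) :=
    countable_iInter_mem.2 fun n => residual_of_dense_open (hD n) (hd n)
  have h3 : Dense (Fᶜ ∩ ⋂ n, D n) := dense_of_mem_residual (Filter.inter_mem h1 h2)
  obtain ⟨ξ, h4, h5, h6⟩ := h3.inter_open_nonempty U hU hne
  exact ⟨ξ, h4, fun n => mem_iInter.1 h6 n, h5⟩

theorem meagre_of_no_disj [Finite X] (F : Set (ℕ → X)) (h : ∀ ζ ∈ F, ¬ Disjunctive ζ) :
    @IsMeagre _ (cantorTop X) F := by
  letI := cantorTop X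
  have hs : F ⊆ ⋃ w : List X, (infixOcc w)ᶜ := by
    intro ζ hζ
    have := h ζ hζ
    simpa [Disjunctive] using this
  refine IsMeagre.mono hs (isMeagre_iUnion fun w => ?_)
  change (infixOcc w)ᶜᶜ ∈ residual _
  rw [compl_compl]
  refine residual_of_dense_open ?_ ?_
  · have : infixOcc w = ⋃ u : List X, cyl (u ++ w) := by
      ext ξ; simp [infixOcc]
    rw [this]
    exact isOpen_iUnion fun u => isOpen_cyl _
  · refine dense_of fun N ξ => ⟨N, le_rfl, wcat (tk N ξ ++ w) ξ, ?_, tk N ξ, wcat_mem_cyl _ _⟩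
    exact cyl_append _ w _ (wcat_mem_cyl _ _)

/-! regular languages -/

theorem reg_finite (W : Language X) (hW : (W : Set (List X)).Finite) :
    (Set.range W.leftQuotient).Finite := by
  have h1 : (⋃ w ∈ (W : Set (List X)), {y | y <:+ w}).Finite := by
    refine hW.biUnion fun w _ => ?_
    refine (List.finite_toSet w.tails).subset ?_
    intro y hy
    simpa using hy
  refine h1.finite_subsets.subset ?_
  rintro _ ⟨x, rfl⟩ y hy
  exact mem_biUnion (x := x ++ y) hy (List.suffix_append x y)

theorem reg_mul (W V : Language X) (hW : (Set.range W.leftQuotient).Finite)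
    (hV : (Set.range V.leftQuotient).Finite) : (Set.range (W * V).leftQuotient).Finite := by
  refine (Set.Finite.image2 (fun (q : Language X) (S : Set (Language X)) =>
    ({y | y ∈ q * V ∨ ∃ l ∈ S, y ∈ l} : Language X)) hW hV.finite_subsets).subset ?_
  rintro _ ⟨x, rfl⟩
  refine ⟨W.leftQuotient x, ⟨x, rfl⟩, {l | ∃ a ∈ W, ∃ b, a ++ b = x ∧ l = V.leftQuotient b}, ?_, ?_⟩
  · rintro _ ⟨a, _, b, _, rfl⟩
    exact ⟨b, rfl⟩
  · ext y
    change (y ∈ W.leftQuotient x * V ∨ ∃ l ∈ {l | ∃ a ∈ W, ∃ b, a ++ b = x ∧ l = V.leftQuotient b},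
      y ∈ l) ↔ x ++ y ∈ W * V
    constructor
    · rintro (h | ⟨_, ⟨a, ha, b, rfl, rfl⟩, hy⟩)
      · obtain ⟨c, hc, d, hd, rfl⟩ := Language.mem_mul.1 h
        exact Language.mem_mul.2 ⟨x ++ c, hc, d, hd, by simp⟩
      · exact Language.mem_mul.2 ⟨a, ha, b ++ y, hy, by simp⟩
    · intro h
      obtain ⟨a, ha, b, hb, hab⟩ := Language.mem_mul.1 h
      rcases List.append_eq_append_iff.1 hab with ⟨c, h1, h2⟩ | ⟨c, h1, h2⟩
      · right
        refine ⟨_, ⟨a, ha, c, h1.symm, rfl⟩, ?_⟩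
        rw [Language.mem_leftQuotient, ← h2]; exact hb
      · left
        refine Language.mem_mul.2 ⟨c, ?_, b, hb, h2.symm⟩
        rw [Language.mem_leftQuotient, ← h1]; exact ha

theorem kstar_append {V : Language X} {a b : List X} (ha : a ∈ V∗) (hb : b ∈ V∗) :
    a ++ b ∈ V∗ := by
  obtain ⟨L, rfl, hL⟩ := ha
  obtain ⟨M, rfl, hM⟩ := hb
  refine ⟨L ++ M, by simp, ?_⟩
  intro y hy
  rcases List.mem_append.1 hy with h | h
  · exact hL y h
  · exact hM y h

theorem kstar_self {V : Language X} {a : List X} (ha : a ∈ V) : a ∈ V∗ :=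
  ⟨[a], by simp, by simpa using ha⟩

theorem star_split (W : Language X) (L : List (List X)) (hL : ∀ y ∈ L, y ∈ W) :
    ∀ x y : List X, x ≠ [] → x ++ y = L.flatten →
      ∃ a ∈ W∗, ∃ b, a ++ b = x ∧ ∃ c, b ++ c ∈ W ∧ ∃ d ∈ W∗, c ++ d = y := by
  induction L with
  | nil => intro x y hx h; simp at h; exact absurd h.1 hx
  | cons v L ih =>
    intro x y hx h
    have hv : v ∈ W := hL v (by simp)
    have hL' : ∀ y ∈ L, y ∈ W := fun y hy => hL y (by simp [hy])
    rw [List.flatten_cons] at h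
    rcases List.append_eq_append_iff.1 h with ⟨c, h1, h2⟩ | ⟨c, h1, h2⟩
    · exact ⟨[], Language.nil_mem_kstar _, x, rfl, c, h1 ▸ hv, _, ⟨L, rfl, hL'⟩, h2.symm⟩
    · by_cases hc : c = []
      · subst hc
        refine ⟨[], Language.nil_mem_kstar _, x, rfl, [], ?_, _, ⟨L, rfl, hL'⟩, ?_⟩
        · rw [h1]; simpa using hv
        · simpa using h2
      · obtain ⟨a, ha, b, hab, r⟩ := ih hL' c y hc h2.symm
        refine ⟨v ++ a, kstar_append (kstar_self hv) ha, b, ?_, r⟩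
        rw [h1, ← hab, List.append_assoc]

theorem reg_star (W : Language X) (hW : (Set.range W.leftQuotient).Finite) :
    (Set.range (W∗).leftQuotient).Finite := by
  refine ((hW.finite_subsets.image (fun S : Set (Language X) =>
    ({y | ∃ l ∈ S, y ∈ l * W∗} : Language X))).union (finite_singleton (W∗))).subset ?_
  rintro _ ⟨x, rfl⟩
  by_cases hx : x = []
  · right; subst hx; rfl
  left
  refine ⟨{l | ∃ a ∈ W∗, ∃ b, a ++ b = x ∧ l = W.leftQuotient b}, ?_, ?_⟩
  · rintro _ ⟨a, _, b, _, rfl⟩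
    exact ⟨b, rfl⟩
  · ext y
    change (∃ l ∈ {l | ∃ a ∈ W∗, ∃ b, a ++ b = x ∧ l = W.leftQuotient b}, y ∈ l * (W∗)) ↔ x ++ y ∈ (W∗)
    constructor
    · rintro ⟨_, ⟨a, ha, b, rfl, rfl⟩, hy⟩
      obtain ⟨c, hc, d, hd, rfl⟩ := Language.mem_mul.1 hy
      have := kstar_append (kstar_append ha (kstar_self hc)) hd
      simpa using this
    · rintro ⟨L, h, hL⟩
      obtain ⟨a, ha, b, hab, c, hc, d, hd, hcd⟩ := star_split W L hL x y hx h
      exact ⟨_, ⟨a, ha, b, hab, rfl⟩, Language.mem_mul.2 ⟨c, hc, d, hd, hcd⟩⟩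

theorem reg_of {W : Language X} (h : IsRegLang W) : (Set.range W.leftQuotient).Finite := by
  induction h with
  | finite W hW => exact reg_finite W hW
  | union W V _ _ h1 h2 =>
    exact ((Language.IsRegular.of_finite_range_leftQuotient h1).add
      (Language.IsRegular.of_finite_range_leftQuotient h2)).finite_range_leftQuotient
  | concat W V _ _ h1 h2 => exact reg_mul W V h1 h2
  | star W _ h => exact reg_star W h

theorem exists_monoid {L : Language X} (h : IsRegLang L) :
    ∃ (N : Type) (_ : Monoid N) (_ : Finite N) (φ : List X → N),
      (∀ x y, φ (x ++ y) = φ x * φ y) ∧ ∀ x y, φ x = φ y → x ∈ L → y ∈ L := by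
  obtain ⟨σ, _, M, rfl⟩ := Language.IsRegular.of_finite_range_leftQuotient (reg_of h)
  haveI : Finite (Function.End σ) := inferInstanceAs (Finite (σ → σ))
  let ψ : List X → Function.End σ := fun x s => M.evalFrom s x
  have hψ : ∀ x y, ψ (x ++ y) = ψ y * ψ x := by
    intro x y
    funext s
    exact M.evalFrom_of_append s x y
  refine ⟨(Function.End σ)ᵐᵒᵖ, inferInstance,
    Finite.of_injective MulOpposite.unop MulOpposite.unop_injective,
    fun x => MulOpposite.op (ψ x), ?_, ?_⟩
  · intro x y
    change MulOpposite.op (ψ (x ++ y)) = MulOpposite.op (ψ x) * MulOpposite.op (ψ y)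
    rw [hψ, MulOpposite.op_mul]
  · intro x y hxy hx
    have h1 := congrFun (MulOpposite.op_injective hxy) M.start
    rw [DFA.mem_accepts] at hx ⊢
    have h2 : M.eval x = M.eval y := h1
    rwa [← h2]

/-! finite monoids -/

theorem exists_idem {N : Type} [Monoid N] [Finite N] (a : N) :
    ∃ k, a ^ (k+1) * a ^ (k+1) = a ^ (k+1) := by
  obtain ⟨i, j, hij, h⟩ := Finite.exists_ne_map_eq_of_infinite (fun n : ℕ => a ^ n)
  wlog hlt : i < j generalizing i j
  · exact this j i hij.symm h.symm (by omega)
  obtain ⟨p, rfl⟩ := Nat.exists_eq_add_of_lt hlt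
  have h1 : ∀ m, a ^ (i + m + (p+1)) = a ^ (i + m) := by
    intro m
    have : i + m + (p+1) = (i + p + 1) + m := by ring
    rw [this, pow_add, ← h, ← pow_add]
  have h2 : ∀ t m, a ^ (i + m + t * (p+1)) = a ^ (i + m) := by
    intro t
    induction t with
    | zero => simp
    | succ t ih =>
      intro m
      have : i + m + (t+1) * (p+1) = i + (m + t * (p+1)) + (p+1) := by ring
      rw [this, h1, ← ih m]; congr 1; ring
  refine ⟨i * p + i + p, ?_⟩
  have := h2 (i+1) (i * p + p + 1)
  rw [← pow_add]
  convert this using 2 <;> ring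

variable {N : Type} [Monoid N]

theorem word_pow (φ : List X → N) (hφ : ∀ x y, φ (x ++ y) = φ x * φ y) (x : List X) (k : ℕ) :
    ∃ y, φ (x ++ y) = φ x ^ (k+1) ∧ ∀ V : Language X, x ∈ V∗ → x ++ y ∈ V∗ := by
  induction k with
  | zero => exact ⟨[], by simp, fun V h => by simpa using h⟩
  | succ k ih =>
    obtain ⟨y, h1, h2⟩ := ih
    refine ⟨x ++ y, ?_, fun V h => kstar_append h (h2 V h)⟩
    rw [hφ, h1, ← pow_succ']

theorem exists_min [Finite N] (φ : List X → N) (hφ : ∀ x y, φ (x ++ y) = φ x * φ y) :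
    ∃ z : List X, ∀ a b y : List X, ∃ w, φ (a ++ z ++ b ++ y ++ w) = φ (a ++ z ++ b) := by
  let I : List X → Set N := fun z => {m | ∃ a b, m = φ (a ++ z ++ b)}
  obtain ⟨z, hz⟩ : ∃ z, ∀ x, (I z).ncard ≤ (I x).ncard := by
    obtain ⟨z, hz⟩ := (wellFounded_lt (α := ℕ)).has_min (range fun z => (I z).ncard) ⟨_, [], rfl⟩
    obtain ⟨⟨z, rfl⟩, hz⟩ := hz
    exact ⟨z, fun x => not_lt.1 (hz _ ⟨x, rfl⟩)⟩
  have key : ∀ a b, I (a ++ z ++ b) = I z := by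
    intro a b
    refine Set.eq_of_subset_of_ncard_le ?_ (hz _) (Set.toFinite _)
    rintro _ ⟨c, d, rfl⟩
    exact ⟨c ++ a, b ++ d, by simp⟩
  refine ⟨z, fun a b y => ?_⟩
  set x := a ++ z ++ b with hx
  have h1 : φ x ∈ I (x ++ y) := by
    have : x ++ y = a ++ z ++ (b ++ y) := by simp [hx]
    rw [this, key]
    exact ⟨a, b, rfl⟩
  obtain ⟨c, d, h1⟩ := h1
  have h2 : φ x = φ c * φ x * φ (y ++ d) := by
    rw [← hφ, ← hφ]
    simpa using h1
  have h3 : ∀ k, φ x = φ c ^ k * φ x * φ (y ++ d) ^ k := by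
    intro k
    induction k with
    | zero => simp
    | succ k ih =>
      rw [pow_succ (φ c), pow_succ' (φ (y ++ d))]
      calc φ x = φ c ^ k * φ x * φ (y ++ d) ^ k := ih
        _ = φ c ^ k * (φ c * φ x * φ (y ++ d)) * φ (y ++ d) ^ k := by rw [← h2]
        _ = _ := by simp only [mul_assoc]
  obtain ⟨k, hk⟩ := exists_idem (φ (y ++ d))
  obtain ⟨r, hr, _⟩ := word_pow φ hφ (y ++ d) k
  refine ⟨d ++ r, ?_⟩
  have : x ++ y ++ (d ++ r) = x ++ ((y ++ d) ++ r) := by simp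
  rw [this, hφ, hr]
  conv_lhs => rw [h3 (k+1)]
  rw [mul_assoc, hk, ← h3]

/-! the omega power -/

theorem omegaPow_coind {V : Language X} (S : Set (ℕ → X))
    (hS : ∀ ξ ∈ S, ∃ v ∈ V, v ≠ [] ∧ ∃ ξ' ∈ S, ξ = wcat v ξ') : S ⊆ omegaPow V := by
  intro ξ hξ
  choose! f hf1 hf2 g hg1 hg2 using hS
  have hm : ∀ k, g^[k] ξ ∈ S := by
    intro k
    induction k with
    | zero => exact hξ
    | succ k ih => rw [Function.iterate_succ_apply']; exact hg1 _ ih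
  refine ⟨fun k => f (g^[k] ξ), fun i => ⟨hf1 _ (hm i), hf2 _ (hm i)⟩, fun k => ⟨g^[k] ξ, ?_⟩⟩
  induction k with
  | zero => rfl
  | succ k ih =>
    rw [List.range_succ, List.map_append, List.flatten_append, wcat_append,
      Function.iterate_succ_apply']
    conv_lhs => rw [ih, hg2 _ (hm k)]
    simp

theorem omegaPow_coind' {V : Language X} (S : Set (ℕ → X))
    (hS : ∀ ξ ∈ S, ∃ v ∈ V∗, v ≠ [] ∧ ∃ ξ' ∈ S, ξ = wcat v ξ') : S ⊆ omegaPow V := by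
  have h1 : {ξ | ∃ c ∈ V∗, ∃ ξ' ∈ S, ξ = wcat c ξ'} ⊆ omegaPow V := by
    apply omegaPow_coind
    have key : ∀ c ∈ V∗, c ≠ [] → ∀ ξ' ∈ S, ∃ v ∈ V, v ≠ [] ∧
        ∃ ξ'' ∈ {ξ | ∃ c ∈ V∗, ∃ ξ' ∈ S, ξ = wcat c ξ'}, wcat c ξ' = wcat v ξ'' := by
      intro c hc hne ξ' hξ'
      rw [Language.kstar_def_nonempty] at hc
      obtain ⟨L, rfl, hL⟩ := hc
      cases L with
      | nil => simp at hne
      | cons v L =>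
        refine ⟨v, (hL v (by simp)).1, (hL v (by simp)).2, wcat L.flatten ξ',
          ⟨_, ⟨L, rfl, fun y hy => (hL y (by simp [hy])).1⟩, ξ', hξ', rfl⟩, ?_⟩
        rw [List.flatten_cons, wcat_append]
    rintro _ ⟨c, hc, ξ', hξ', rfl⟩
    by_cases hne : c = []
    · subst hne
      obtain ⟨v, hv, hv', ξ'', h, rfl⟩ := hS ξ' hξ'
      exact key v hv hv' ξ'' h
    · exact key c hc hne ξ' hξ'
  intro ξ hξ
  exact h1 ⟨[], Language.nil_mem_kstar _, ξ, hξ, rfl⟩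

theorem S0_subset {V : Language X} (φ : List X → N) (hφ : ∀ x y, φ (x ++ y) = φ x * φ y)
    (hV : ∀ x y, φ x = φ y → x ∈ V∗ → y ∈ V∗) (z : List X) (hz : z ∈ V∗)
    (hi : φ z * φ z = φ z) :
    {ξ : ℕ → X | ξ ∈ cyl z ∧ ∀ M, ∃ n ≥ M, φ (tk n ξ) = φ z ∧ dp n ξ ∈ cyl z} ⊆ omegaPow V := by
  apply omegaPow_coind'
  rintro ξ ⟨h1, h2⟩
  obtain ⟨n, hn, h3, h4⟩ := h2 1
  refine ⟨tk n ξ, hV _ _ h3.symm hz, ?_, dp n ξ, ⟨h4, ?_⟩, (wcat_tk_dp n ξ).symm⟩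
  · intro h
    have := tk_length n ξ
    rw [h] at this
    simp at this
    omega
  · intro M
    obtain ⟨m, hm, h5, h6⟩ := h2 (n + (z.length + M))
    obtain ⟨r, rfl⟩ := Nat.exists_eq_add_of_le (show n ≤ m by omega)
    refine ⟨r, by omega, ?_, by rwa [dp_dp]⟩
    obtain ⟨t, ht⟩ := tk_eq_of_cyl z (dp n ξ) r (by omega) h4
    rw [tk_add, hφ, h3, ht, hφ, ← mul_assoc, hi] at h5
    rw [ht, hφ, h5]

theorem flatten_length (f : ℕ → List X) (hf : ∀ i, f i ≠ []) (k : ℕ) :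
    k ≤ (((List.range k).map f).flatten).length := by
  induction k with
  | zero => simp
  | succ k ih =>
    rw [List.range_succ, List.map_append, List.flatten_append, List.length_append]
    have := List.length_pos_iff.2 (hf k)
    simp only [List.map_cons, List.map_nil, List.flatten_cons, List.flatten_nil, List.append_nil]
    omega

theorem not_meagre_of [Finite X] (F : Set (ℕ → X)) (W V : Language X) (hreg : IsRegLang V)
    (hF : catOmega W (omegaPow V) ⊆ F) (ζ : ℕ → X) (hζ : ζ ∈ catOmega W (omegaPow V))
    (hd : Disjunctive ζ) : ¬ @IsMeagre _ (cantorTop X) F := by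
  intro hmeagre
  obtain ⟨N, _, _, φ, hφ, hV⟩ := exists_monoid (IsRegLang.star V hreg)
  obtain ⟨z, hz⟩ := exists_min φ hφ
  obtain ⟨w, hw, η, ⟨f, hf1, hf2⟩, rfl⟩ := hζ
  -- `z` occurs in `η`
  obtain ⟨u, hu⟩ : ∃ u, η ∈ cyl (u ++ z) := by
    obtain ⟨u, θ, hu⟩ := hd (w ++ z)
    refine ⟨(u ++ w).drop w.length, θ, ?_⟩
    have h1 : u ++ (w ++ z) = (u ++ w).take w.length ++ ((u ++ w).drop w.length ++ z) := by
      rw [← List.append_assoc (List.take _ _), List.take_append_drop, List.append_assoc]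
    rw [h1, wcat_append] at hu
    have h2 := congrArg (dp w.length) hu
    rw [dp_wcat] at h2
    have h3 : ((u ++ w).take w.length).length = w.length := by simp
    have h4 := dp_wcat ((u ++ w).take w.length) (wcat ((u ++ w).drop w.length ++ z) θ)
    rw [h3] at h4
    rw [h2, h4]
  obtain ⟨x, hx, hne, b, hxb⟩ : ∃ x ∈ V∗, x ≠ [] ∧ ∃ b, x = u ++ z ++ b := by
    let k := (u ++ z).length + 1
    have hl := flatten_length f (fun i => (hf1 i).2) k
    have hc := hf2 k
    refine ⟨((List.range k).map f).flatten, ?_, ?_, ?_⟩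
    · refine ⟨_, rfl, ?_⟩
      intro y hy
      obtain ⟨i, _, rfl⟩ := List.mem_map.1 hy
      exact (hf1 i).1
    · intro h
      rw [h] at hl
      simp [k] at hl
    · rw [mem_cyl] at hc
      rw [← hc]
      exact tk_eq_of_cyl _ _ _ (by omega) hu
  obtain ⟨k, hk⟩ := exists_idem (φ x)
  obtain ⟨r, hr, hr2⟩ := word_pow φ hφ x k
  set e := x ++ r with he
  have hei : φ e * φ e = φ e := by rw [hr, hk]
  have heV : e ∈ V∗ := hr2 V hx
  have hext : ∀ y, ∃ v, φ (e ++ y ++ v) = φ e := by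
    intro y
    obtain ⟨v, hv⟩ := hz u (b ++ r) y
    refine ⟨v, ?_⟩
    have : e = u ++ z ++ (b ++ r) := by rw [he, hxb]; simp
    rw [this]; exact hv
  let D : ℕ → Set (ℕ → X) := fun M => {ξ | ξ ∈ cyl (w ++ e) →
    ∃ n ≥ M, φ (tk n (dp w.length ξ)) = φ e ∧ dp n (dp w.length ξ) ∈ cyl e}
  have hop : ∀ n, @IsOpen _ (cantorTop X) (D n) := by
    intro M
    have hD : D M = {ξ | ¬ (tk (w ++ e).length ξ = w ++ e)} ∪ ⋃ n : {n // n ≥ M},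
        {ξ | φ ((tk (w.length + n + e.length) ξ).drop w.length |>.take n) = φ e ∧
          (tk (w.length + n + e.length) ξ).drop (w.length + n) = e} := by
      ext ξ
      have aux : ∀ n, ((tk (w.length + n + e.length) ξ).drop w.length).take n
            = tk n (dp w.length ξ) ∧
          (tk (w.length + n + e.length) ξ).drop (w.length + n) = tk e.length (dp n (dp w.length ξ)) := by
        intro n
        have h5 := tk_length w.length ξ
        have h6 := tk_length n (dp w.length ξ)
        rw [tk_add, dp_dp]
        constructor
        · rw [tk_add, List.append_assoc, List.drop_append_of_le_length (by omega),
            List.drop_of_length_le (by omega), List.nil_append,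
            List.take_append_of_le_length (by omega), List.take_of_length_le (by omega)]
        · rw [List.drop_append_of_le_length (by rw [tk_length]),
            List.drop_of_length_le (by rw [tk_length]), List.nil_append]
      simp only [D, mem_union, mem_iUnion, mem_setOf_eq, mem_cyl, aux, imp_iff_not_or,
        Subtype.exists, exists_prop]
    rw [hD]
    letI := cantorTop X
    exact IsOpen.union (isOpen_tk _ (fun l => ¬ (l = w ++ e)))
      (isOpen_iUnion fun n => isOpen_tk _ (fun l => φ ((l.drop w.length).take n) = φ e ∧
        l.drop (w.length + n) = e))
  have hde : ∀ n, @Dense _ (cantorTop X) (D n) := by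
    intro M
    refine dense_of fun K ξ => ?_
    by_cases hξ : ξ ∈ cyl (w ++ e)
    · let n := (w ++ e).length + (K + M)
      obtain ⟨y, hy⟩ := tk_eq_of_cyl (w ++ e) ξ n (by omega) hξ
      obtain ⟨v, hv⟩ := hext y
      refine ⟨n, by omega, wcat (w ++ ((e ++ y ++ v) ++ e)) ξ, ?_, ?_⟩
      · rw [hy]
        refine cyl_append _ (v ++ e) _ ?_
        have : w ++ e ++ y ++ (v ++ e) = w ++ ((e ++ y ++ v) ++ e) := by simp
        rw [this]
        exact wcat_mem_cyl _ _
      · intro _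
        refine ⟨(e ++ y ++ v).length, ?_, ?_, ?_⟩
        · have := congrArg List.length hy
          rw [tk_length] at this
          simp [n] at this ⊢
          omega
        · rw [wcat_append, dp_wcat, wcat_append, tk_wcat, hv]
        · rw [wcat_append, dp_wcat, wcat_append, dp_wcat]
          exact wcat_mem_cyl _ _
    · refine ⟨K, le_rfl, ξ, ?_, fun h => absurd h hξ⟩
      rw [mem_cyl, tk_length]
  obtain ⟨ξ, h1, h2, h3⟩ := residual_inter D hop hde F hmeagre (cyl (w ++ e)) (isOpen_cyl _)
    ⟨_, wcat_mem_cyl _ η⟩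
  apply h3
  apply hF
  obtain ⟨θ, rfl⟩ := cyl_append _ _ _ h1
  refine ⟨w, hw, θ, ?_, rfl⟩
  apply S0_subset φ hφ hV e heV hei
  have h4 := dp_cyl_append _ _ _ h1
  rw [dp_wcat] at h4
  refine ⟨h4, fun M => ?_⟩
  have := h2 M h1
  rwa [dp_wcat] at this

theorem stmt5 {X : Type} [Fintype X] (hX : 2 ≤ Fintype.card X)
    (F : Set (ℕ → X)) (hreg : IsRegOmega F) :
    @IsMeagre _ (cantorTop X) F ↔ ∀ ζ ∈ F, ¬ Disjunctive ζ := by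
  refine ⟨fun hm ζ hζ hd => ?_, meagre_of_no_disj F⟩
  obtain ⟨n, W, V, h, rfl⟩ := hreg
  obtain ⟨i, hi⟩ := mem_iUnion.1 hζ
  exact not_meagre_of _ (W i) (V i) (h i).2 (subset_iUnion_of_subset i subset_rfl) ζ hi hd hm

end AutoBaire
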